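/- Fix a real vector space X, an integer T ≥ 1 and f : X^{T+1} → EReal. For 0 ≤ t < T define the operator ♯_t mapping g : X^{t+2} → EReal to g^{♯_t} : X^{t+1} → EReal by g^{♯_t}(x₀,…,x_t) = (g(x₀,…,x_t,·))^♯(x_t), i.e. the concave envelope in the last variable evaluated at the penultimate variable, and let ♯(T) = ♯₀ ∘ ⋯ ∘ ♯_{T−1}. Then for every x₀ ∈ X, f^{♯(T)}(x₀) = sup_{μ ∈ M^T(x₀)} μ[f]. -/

import Mathlib

/-- An `EReal`-valued function on a real vector space is concave
(with the convention `⊤ + ⊥ = ⊥` of `EReal`). -/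
def IsEConcave {X : Type*} [AddCommGroup X] [Module ℝ X] (ψ : X → EReal) : Prop :=
  ∀ x y : X, ∀ a b : ℝ, 0 ≤ a → 0 ≤ b → a + b = 1 →
    (a : EReal) * ψ x + (b : EReal) * ψ y ≤ ψ (a • x + b • y)

/-- The concave envelope `g^♯` of `g : X → EReal`: the pointwise infimum of all
concave functions dominating `g`. -/
noncomputable def concaveEnvelope {X : Type*} [AddCommGroup X] [Module ℝ X]
    (g : X → EReal) (x : X) : EReal :=
  ⨅ ψ : {ψ : X → EReal // IsEConcave ψ ∧ ∀ y, g y ≤ ψ y}, ψ.1 x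

/-- A finitely supported probability measure on `X^{T+1}` under which the coordinate
process is a martingale in its natural filtration, starting at `x₀`; an element of
`M^T(x₀)` (the law of a simple martingale `M₀, …, M_T` with `M₀ = x₀`).
The martingale property is expressed by testing the increment `π(t+1) - π(t)`
against all functions `h` of the path depending only on the first `t+1` coordinates. -/
structure MartLaw (X : Type*) [AddCommGroup X] [Module ℝ X] (T : ℕ) (x₀ : X) where
  supp : Finset (Fin (T + 1) → X)
  w : (Fin (T + 1) → X) → ℝ
  nonneg : ∀ π, 0 ≤ w π
  zero_off : ∀ π ∉ supp, w π = 0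
  total : ∑ π ∈ supp, w π = 1
  init : ∀ π ∈ supp, w π ≠ 0 → π 0 = x₀
  mart : ∀ t : Fin T, ∀ h : (Fin (T + 1) → X) → ℝ,
    (∀ π π' : Fin (T + 1) → X, (∀ s : Fin (T + 1), s ≤ t.castSucc → π s = π' s) → h π = h π') →
    ∑ π ∈ supp, (w π * h π) • (π t.succ - π t.castSucc) = 0

/-- The integral `μ[f]` of an `EReal`-valued function on path space under a finitely
supported martingale law, as a finite sum in `EReal`. -/
noncomputable def MartLaw.exp {X : Type*} [AddCommGroup X] [Module ℝ X] {T : ℕ} {x₀ : X}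
    (μ : MartLaw X T x₀) (f : (Fin (T + 1) → X) → EReal) : EReal :=
  ∑ π ∈ μ.supp, (μ.w π : EReal) * f π

/-- The operator `♯_t`, mapping `g : X^{t+2} → EReal` to `g^{♯_t} : X^{t+1} → EReal`,
the concave envelope in the last variable evaluated at the penultimate variable. -/
noncomputable def Sop {X : Type*} [AddCommGroup X] [Module ℝ X] (t : ℕ)
    (g : (Fin (t + 2) → X) → EReal) : (Fin (t + 1) → X) → EReal :=
  fun x => concaveEnvelope (fun y => g (Fin.snoc x y)) (x (Fin.last t))

/-- The backward composition `♯(s) = ♯₀ ∘ ⋯ ∘ ♯_{s-1}`, mapping a function of `s+1`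
variables to a function of one variable. -/
noncomputable def Scomp {X : Type*} [AddCommGroup X] [Module ℝ X] :
    (s : ℕ) → ((Fin (s + 1) → X) → EReal) → ((Fin 1 → X) → EReal)
  | 0, g => g
  | s + 1, g => Scomp s (Sop s g)

/-!
By induction on `T` it suffices that one envelope step preserves the supremum: the values `μ[f^♯ₜ]`
over laws `μ` of `t`-step martingales and the values `ν[f]` over laws of `(t + 1)`-step ones have
the same supremum.

Given `ν`, Jensen's inequality for the concave envelope, applied to the last step conditionally on
the earlier ones, bounds `ν[f]` by the integral of `f^♯ₜ` against the law of the earlier ones.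

Given `μ`, the envelope at a point is at most the supremum of the integrals over finitely supported
laws with that barycentre, because this supremum is concave in the point. Finite weighted sums
commute with suprema chosen independently for each term, so `μ[f^♯ₜ]` is at most the supremum of
the values `ν[f]` over continuations `ν` of `μ` by one step drawn from such laws.
-/

section WeightedSums

variable {ι : Type*} (s : Finset ι)

theorem ereal_coe_sum (r : ι → ℝ) : ((∑ i ∈ s, r i : ℝ) : EReal) = ∑ i ∈ s, (r i : EReal) :=
  map_sum ({ toFun := Real.toEReal, map_zero' := EReal.coe_zero,
             map_add' := EReal.coe_add } : ℝ →+ EReal) r s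

theorem ereal_mul_sum {a : EReal} (ha : 0 ≤ a) (ha' : a ≠ ⊤) (F : ι → EReal) :
    a * ∑ i ∈ s, F i = ∑ i ∈ s, a * F i :=
  map_sum ({ toFun := (a * ·), map_zero' := mul_zero a,
             map_add' := EReal.left_distrib_of_nonneg_of_ne_top ha ha' } : EReal →+ EReal) F s

variable {s}

theorem ereal_sum_mul {w : ι → EReal} (hw : ∀ i ∈ s, 0 ≤ w i) (c : EReal) :
    (∑ i ∈ s, w i) * c = ∑ i ∈ s, w i * c := by
  classical
  induction s using Finset.induction_on with
  | empty => simp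
  | insert i s hi ih =>
    rw [Finset.forall_mem_insert] at hw
    rw [Finset.sum_insert hi, Finset.sum_insert hi, ← ih hw.2,
      EReal.right_distrib_of_nonneg hw.1 (Finset.sum_nonneg hw.2)]

theorem ereal_exists_lt_exists_lt_le_add {x y b : EReal} (hb : b < x + y) :
    ∃ x' < x, ∃ y' < y, b ≤ x' + y' := by
  by_contra! hlt
  exact hb.not_ge (EReal.add_le_of_forall_lt fun x' hx' y' hy' => (hlt x' hx' y' hy').le)

theorem ereal_exists_real_lt_le_mul {a : ℝ} (ha : 0 ≤ a) {x b : EReal} (hb : b < (a : EReal) * x) :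
    ∃ r : ℝ, (a ≠ 0 → (r : EReal) < x) ∧ b ≤ (a : EReal) * (r : EReal) := by
  rcases ha.eq_or_lt with rfl | ha
  · exact ⟨0, by simp, by simpa using hb.le⟩
  · have ha' : (0 : EReal) < a := EReal.coe_pos.2 ha
    rw [mul_comm, ← EReal.div_lt_iff ha' (EReal.coe_ne_top a)] at hb
    obtain ⟨r, hbr, hrx⟩ := EReal.lt_iff_exists_real_btwn.1 hb
    exact ⟨r, fun _ => hrx, (EReal.div_le_iff_le_mul ha' (EReal.coe_ne_top a)).1 hbr.le⟩

theorem ereal_exists_real_lt_le_sum_mul {w : ι → ℝ} (hw : ∀ i ∈ s, 0 ≤ w i) {F : ι → EReal}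
    {b : EReal} (hb : b < ∑ i ∈ s, (w i : EReal) * F i) :
    ∃ r : ι → ℝ, (∀ i ∈ s, w i ≠ 0 → (r i : EReal) < F i) ∧
      b ≤ ∑ i ∈ s, (w i : EReal) * (r i : EReal) := by
  classical
  induction s using Finset.induction_on generalizing b with
  | empty => exact ⟨0, by simp, by simpa using hb.le⟩
  | insert i s hi ih =>
    rw [Finset.forall_mem_insert] at hw
    rw [Finset.sum_insert hi] at hb
    obtain ⟨b₁, hb₁, b₂, hb₂, hb⟩ := ereal_exists_lt_exists_lt_le_add hb
    obtain ⟨q, hq, hbq⟩ := ereal_exists_real_lt_le_mul hw.1 hb₁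
    obtain ⟨r, hr, hbr⟩ := ih hw.2 hb₂
    have hupdate : ∀ j ∈ s, Function.update r i q j = r j := fun j hj =>
      Function.update_of_ne (ne_of_mem_of_not_mem hj hi) q r
    refine ⟨Function.update r i q,
      (Finset.forall_mem_insert ..).2 ⟨by simpa using hq, fun j hj => ?_⟩, ?_⟩
    · simpa only [hupdate j hj] using hr j hj
    · rw [Finset.sum_insert hi, Function.update_self,
        Finset.sum_congr rfl fun j hj => by rw [hupdate j hj]]
      exact hb.trans (add_le_add hbq hbr)

theorem ereal_sum_mul_iSup_le {κ : ι → Type*} [∀ i, Nonempty (κ i)] {w : ι → ℝ}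
    (hw : ∀ i ∈ s, 0 ≤ w i) (F : ∀ i, κ i → EReal) :
    ∑ i ∈ s, (w i : EReal) * ⨆ k, F i k ≤
      ⨆ k : ∀ i, κ i, ∑ i ∈ s, (w i : EReal) * F i (k i) := by
  refine le_of_forall_lt_imp_le_of_dense fun b hb => ?_
  obtain ⟨r, hr, hbr⟩ := ereal_exists_real_lt_le_sum_mul hw hb
  have hchoice : ∀ i, ∃ k, i ∈ s → w i ≠ 0 → (r i : EReal) < F i k := fun i => by
    by_cases hi : i ∈ s ∧ w i ≠ 0
    · obtain ⟨k, hk⟩ := lt_iSup_iff.1 (hr i hi.1 hi.2)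
      exact ⟨k, fun _ _ => hk⟩
    · exact ⟨Classical.arbitrary _, fun his hwi => (hi ⟨his, hwi⟩).elim⟩
  choose k hk using hchoice
  refine hbr.trans (le_iSup_of_le k (Finset.sum_le_sum fun i hi => ?_))
  rcases eq_or_ne (w i) 0 with hwi | hwi
  · simp [hwi]
  · exact mul_le_mul_of_nonneg_left (hk i hi hwi).le (EReal.coe_nonneg.2 (hw i hi))

end WeightedSums

section Concave

variable {X : Type*} [AddCommGroup X] [Module ℝ X]

theorem IsEConcave.convex_hypograph {ψ : X → EReal} (hψ : IsEConcave ψ) :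
    Convex ℝ {p : X × ℝ | (p.2 : EReal) ≤ ψ p.1} := by
  intro p hp q hq a b ha hb hab
  refine le_trans ?_ (hψ p.1 q.1 a b ha hb hab)
  simpa using add_le_add (mul_le_mul_of_nonneg_left hp (EReal.coe_nonneg.2 ha))
    (mul_le_mul_of_nonneg_left hq (EReal.coe_nonneg.2 hb))

-- Jensen's inequality, stated homogeneously: the weights will be the masses of the paths with a
-- given initial segment, which sum to the mass of the segment, possibly `0`.
theorem IsEConcave.sum_mul_le {ψ : X → EReal} (hψ : IsEConcave ψ) {ι : Type*} {s : Finset ι}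
    {w : ι → ℝ} (hw : ∀ i ∈ s, 0 ≤ w i) {y : ι → X} {x : X}
    (hx : ∑ i ∈ s, w i • (y i - x) = 0) :
    ∑ i ∈ s, (w i : EReal) * ψ (y i) ≤ ∑ i ∈ s, (w i : EReal) * ψ x := by
  classical
  rcases (Finset.sum_nonneg hw).eq_or_lt with hzero | hpos
  · have hw0 := (Finset.sum_eq_zero_iff_of_nonneg hw).1 hzero.symm
    exact (Finset.sum_congr rfl fun i hi => by simp [hw0 i hi]).le
  · refine le_of_forall_lt_imp_le_of_dense fun b hb => ?_
    obtain ⟨r, hr, hbr⟩ := ereal_exists_real_lt_le_sum_mul hw hb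
    have hcenter : s.centerMass w y = x := by
      simp only [smul_sub, Finset.sum_sub_distrib, ← Finset.sum_smul, sub_eq_zero] at hx
      rw [Finset.centerMass, hx, inv_smul_smul₀ hpos.ne']
    have hmem : s.centerMass w (fun i => (y i, r i)) ∈ {p : X × ℝ | (p.2 : EReal) ≤ ψ p.1} := by
      rw [← Finset.centerMass_filter_ne_zero]
      refine hψ.convex_hypograph.centerMass_mem (fun i hi => hw i (Finset.mem_filter.1 hi).1)
        (by rwa [Finset.sum_filter_ne_zero]) fun i hi => ?_
      exact (hr i (Finset.mem_filter.1 hi).1 (Finset.mem_filter.1 hi).2).le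
    have hle : ((s.centerMass w r : ℝ) : EReal) ≤ ψ x := by
      simpa [Finset.centerMass, Prod.fst_sum, Prod.snd_sum, ← hcenter] using hmem
    calc b ≤ ∑ i ∈ s, (w i : EReal) * (r i : EReal) := hbr
      _ = ((∑ i ∈ s, w i : ℝ) : EReal) * (s.centerMass w r : ℝ) := by
        rw [← EReal.coe_mul, Finset.centerMass, ← smul_eq_mul, smul_inv_smul₀ hpos.ne',
          ereal_coe_sum]
        simp
      _ ≤ ((∑ i ∈ s, w i : ℝ) : EReal) * ψ x :=
        mul_le_mul_of_nonneg_left hle (EReal.coe_nonneg.2 hpos.le)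
      _ = ∑ i ∈ s, (w i : EReal) * ψ x := by
        rw [ereal_coe_sum, ereal_sum_mul fun i hi => EReal.coe_nonneg.2 (hw i hi)]

theorem le_concaveEnvelope (g : X → EReal) (x : X) : g x ≤ concaveEnvelope g x :=
  le_iInf fun ψ => ψ.2.2 x

theorem concaveEnvelope_le {g ψ : X → EReal} (hψ : IsEConcave ψ) (hg : ∀ y, g y ≤ ψ y) (x : X) :
    concaveEnvelope g x ≤ ψ x :=
  iInf_le_of_le ⟨ψ, hψ, hg⟩ le_rfl

theorem isEConcave_concaveEnvelope (g : X → EReal) : IsEConcave (concaveEnvelope g) := by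
  intro x y a b ha hb hab
  refine le_iInf fun ψ => le_trans ?_ (ψ.2.1 x y a b ha hb hab)
  gcongr
  · exact concaveEnvelope_le ψ.2.1 ψ.2.2 x
  · exact concaveEnvelope_le ψ.2.1 ψ.2.2 y

theorem sum_mul_le_sum_mul_concaveEnvelope (g : X → EReal) {ι : Type*} {s : Finset ι}
    {w : ι → ℝ} (hw : ∀ i ∈ s, 0 ≤ w i) {y : ι → X} {x : X}
    (hx : ∑ i ∈ s, w i • (y i - x) = 0) :
    ∑ i ∈ s, (w i : EReal) * g (y i) ≤ ∑ i ∈ s, (w i : EReal) * concaveEnvelope g x :=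
  (Finset.sum_le_sum fun i hi => mul_le_mul_of_nonneg_left (le_concaveEnvelope g (y i))
    (EReal.coe_nonneg.2 (hw i hi))).trans ((isEConcave_concaveEnvelope g).sum_mul_le hw hx)

end Concave

/-- A finitely supported probability law on `X` with barycentre `x`, i.e. one step of a simple
martingale from `x`. It is encoded as a finite family of weighted points, not necessarily
distinct, so that laws can be glued without collecting the weights of coinciding points. -/
structure BaryLaw (X : Type*) [AddCommGroup X] [Module ℝ X] (x : X) where
  ι : Type
  [fintype : Fintype ι]
  w : ι → ℝ
  point : ι → X
  nonneg : ∀ i, 0 ≤ w i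
  total : ∑ i, w i = 1
  bary : ∑ i, w i • point i = x

namespace BaryLaw

attribute [instance] BaryLaw.fintype

variable {X : Type*} [AddCommGroup X] [Module ℝ X] {x : X}

/-- The integral of `g` against the law `c`. -/
noncomputable def exp (c : BaryLaw X x) (g : X → EReal) : EReal :=
  ∑ i, (c.w i : EReal) * g (c.point i)

theorem sum_smul_sub (c : BaryLaw X x) : ∑ i, c.w i • (c.point i - x) = 0 := by
  simp only [smul_sub, Finset.sum_sub_distrib, ← Finset.sum_smul, c.total, c.bary, one_smul,
    sub_self]

/-- The Dirac law at `x`. -/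
def dirac (x : X) : BaryLaw X x where
  ι := Unit
  w _ := 1
  point _ := x
  nonneg _ := zero_le_one
  total := by simp
  bary := by simp

instance : Nonempty (BaryLaw X x) := ⟨dirac x⟩

theorem exp_dirac (g : X → EReal) : (dirac x).exp g = g x :=
  (Fintype.sum_unique (ι := Unit) _).trans (one_mul _)

/-- The law giving mass `a` to `x` and mass `b` to `y`. -/
def pair (x y : X) {a b : ℝ} (ha : 0 ≤ a) (hb : 0 ≤ b) (hab : a + b = 1) :
    BaryLaw X (a • x + b • y) where
  ι := Bool
  w i := cond i a b
  point i := cond i x y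
  nonneg i := by cases i <;> assumption
  total := by simpa using hab
  bary := by simp

theorem exp_pair (x y : X) {a b : ℝ} (ha : 0 ≤ a) (hb : 0 ≤ b) (hab : a + b = 1)
    (g : X → EReal) : (pair x y ha hb hab).exp g = a * g x + b * g y :=
  Fintype.sum_bool _

/-- The law of the second of two successive steps: first a point drawn from `c`, then one drawn
from the law `κ` attached to it. -/
def bind (c : BaryLaw X x) (κ : ∀ i, BaryLaw X (c.point i)) : BaryLaw X x where
  ι := Σ i, (κ i).ι
  w k := c.w k.1 * (κ k.1).w k.2
  point k := (κ k.1).point k.2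
  nonneg k := mul_nonneg (c.nonneg _) ((κ _).nonneg _)
  total := by simp only [Fintype.sum_sigma, ← Finset.mul_sum, total, mul_one]
  bary := by simp only [Fintype.sum_sigma, mul_smul, ← Finset.smul_sum, bary]

theorem exp_bind (c : BaryLaw X x) (κ : ∀ i, BaryLaw X (c.point i)) (g : X → EReal) :
    (c.bind κ).exp g = ∑ i, (c.w i : EReal) * (κ i).exp g := by
  change ∑ k : Σ i, (κ i).ι, ((c.w k.1 * (κ k.1).w k.2 : ℝ) : EReal) * g ((κ k.1).point k.2) = _
  simp only [Fintype.sum_sigma, EReal.coe_mul, mul_assoc, exp,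
    ereal_mul_sum _ (EReal.coe_nonneg.2 (c.nonneg _)) (EReal.coe_ne_top _)]

theorem isEConcave_iSup_exp (g : X → EReal) :
    IsEConcave fun x => ⨆ c : BaryLaw X x, c.exp g := by
  intro x y a b ha hb hab
  let c := pair x y ha hb hab
  calc (a : EReal) * (⨆ d : BaryLaw X x, d.exp g) + (b : EReal) * ⨆ d : BaryLaw X y, d.exp g
      = ∑ i, (c.w i : EReal) * ⨆ d : BaryLaw X (c.point i), d.exp g :=
        (exp_pair x y ha hb hab fun z => ⨆ d : BaryLaw X z, d.exp g).symm
    _ ≤ ⨆ κ : ∀ i, BaryLaw X (c.point i), ∑ i, (c.w i : EReal) * (κ i).exp g :=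
        ereal_sum_mul_iSup_le (fun i _ => c.nonneg i) _
    _ ≤ ⨆ d : BaryLaw X (a • x + b • y), d.exp g :=
        iSup_le fun κ => le_iSup_of_le (c.bind κ) (c.exp_bind κ g).ge

end BaryLaw

theorem concaveEnvelope_le_iSup_exp {X : Type*} [AddCommGroup X] [Module ℝ X] (g : X → EReal)
    (x : X) : concaveEnvelope g x ≤ ⨆ c : BaryLaw X x, c.exp g :=
  concaveEnvelope_le (BaryLaw.isEConcave_iSup_exp g)
    (fun y => le_iSup_of_le (BaryLaw.dirac y) (BaryLaw.exp_dirac g).ge) x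

theorem dependsOn_snoc {X β : Type*} {n : ℕ} {h : (Fin (n + 2) → X) → β} {t : Fin (n + 1)}
    (hh : DependsOn h (Set.Iic t.castSucc)) {π π' : Fin (n + 1) → X}
    (hπ : ∀ s ≤ t, π s = π' s) (y y' : X) :
    h (Fin.snoc π y) = h (Fin.snoc π' y') := by
  refine hh fun s hs => ?_
  obtain ⟨s, rfl⟩ := Fin.exists_castSucc_eq.2 (ne_of_lt (lt_of_le_of_lt hs t.castSucc_lt_last))
  rw [Fin.snoc_castSucc (α := fun _ => X), Fin.snoc_castSucc (α := fun _ => X)]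
  exact hπ s hs

namespace MartLaw

variable {X : Type*} [AddCommGroup X] [Module ℝ X] {T : ℕ} {x₀ : X}

section OfFamily

variable {ι : Type*} (s : Finset ι) (w : ι → ℝ) (p : ι → Fin (T + 1) → X)
  (hw : ∀ i ∈ s, 0 ≤ w i) (total : ∑ i ∈ s, w i = 1)
  (init : ∀ i ∈ s, w i ≠ 0 → p i 0 = x₀)
  (mart : ∀ t : Fin T, ∀ h : (Fin (T + 1) → X) → ℝ, DependsOn h (Set.Iic t.castSucc) →
    ∑ i ∈ s, (w i * h (p i)) • (p i t.succ - p i t.castSucc) = 0)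

open Classical in
/-- The law of the path `p i`, where the index `i ∈ s` is drawn with probability `w i`. -/
noncomputable def ofFamily : MartLaw X T x₀ where
  supp := s.image p
  w π := ∑ i ∈ s with p i = π, w i
  nonneg π := Finset.sum_nonneg fun i hi => hw i (Finset.mem_filter.1 hi).1
  zero_off π hπ := Finset.sum_eq_zero fun i hi =>
    (hπ (Finset.mem_image.2 ⟨i, Finset.mem_filter.1 hi⟩)).elim
  total := by
    rw [← total]
    exact Finset.sum_fiberwise_of_maps_to (fun i hi => Finset.mem_image_of_mem p hi) w
  init π _ hπ := by
    obtain ⟨i, hi, hwi⟩ := Finset.exists_ne_zero_of_sum_ne_zero hπ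
    obtain ⟨his, rfl⟩ := Finset.mem_filter.1 hi
    exact init i his hwi
  mart t h hh := by
    rw [← mart t h fun _ _ => hh _ _,
      ← Finset.sum_fiberwise_of_maps_to fun i hi => Finset.mem_image_of_mem p hi]
    refine Finset.sum_congr rfl fun π _ => ?_
    rw [Finset.sum_mul, Finset.sum_smul]
    refine Finset.sum_congr rfl fun i hi => ?_
    rw [(Finset.mem_filter.1 hi).2]

theorem exp_ofFamily (f : (Fin (T + 1) → X) → EReal) :
    (ofFamily s w p hw total init mart).exp f = ∑ i ∈ s, (w i : EReal) * f (p i) := by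
  classical
  rw [← Finset.sum_fiberwise_of_maps_to fun i hi => Finset.mem_image_of_mem p hi]
  refine Finset.sum_congr (by simp [ofFamily]) fun π _ => ?_
  simp only [ofFamily, ereal_coe_sum]
  rw [ereal_sum_mul fun i hi => EReal.coe_nonneg.2 (hw i (Finset.mem_filter.1 hi).1)]
  refine Finset.sum_congr (by congr) fun i hi => ?_
  rw [(Finset.mem_filter.1 hi).2]

end OfFamily

instance : Nonempty (MartLaw X T x₀) :=
  ⟨ofFamily {()} (fun _ => 1) (fun _ _ => x₀) (by simp) (by simp) (by simp) (by simp)⟩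

theorem exp_zero (μ : MartLaw X 0 x₀) (f : (Fin 1 → X) → EReal) :
    μ.exp f = f fun _ => x₀ := by
  have hpath : ∀ π ∈ μ.supp, μ.w π ≠ 0 → π = fun _ => x₀ := fun π hπ hwπ =>
    funext fun i => by rw [Fin.fin_one_eq_zero i, μ.init π hπ hwπ]
  calc μ.exp f = ∑ π ∈ μ.supp, (μ.w π : EReal) * f fun _ => x₀ :=
        Finset.sum_congr rfl fun π hπ => by
          by_cases hwπ : μ.w π = 0
          · simp [hwπ]
          · rw [hpath π hπ hwπ]
    _ = f fun _ => x₀ := by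
        rw [← ereal_sum_mul fun π _ => EReal.coe_nonneg.2 (μ.nonneg π), ← ereal_coe_sum, μ.total,
          EReal.coe_one, one_mul]

section DropLast

variable (ν : MartLaw X (T + 1) x₀)

/-- The law of the first `T + 1` coordinates. -/
noncomputable def dropLast : MartLaw X T x₀ :=
  ofFamily ν.supp ν.w Fin.init (fun π _ => ν.nonneg π) ν.total ν.init fun t h hh =>
    ν.mart t.castSucc (fun π => h (Fin.init π)) fun _ _ hπ => hh fun s hs => hπ s.castSucc hs

theorem exp_dropLast (g : (Fin (T + 1) → X) → EReal) :
    ν.dropLast.exp g = ∑ π ∈ ν.supp, (ν.w π : EReal) * g (Fin.init π) :=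
  exp_ofFamily ..

open Classical in
theorem sum_filter_init_smul_sub (ρ : Fin (T + 1) → X) :
    ∑ π ∈ ν.supp with Fin.init π = ρ, ν.w π • (π (Fin.last (T + 1)) - ρ (Fin.last T)) = 0 := by
  rw [← ν.mart (Fin.last T) (fun π => if Fin.init π = ρ then 1 else 0) fun π π' hπ => ?_,
    Finset.sum_filter]
  · refine Finset.sum_congr rfl fun π _ => ?_
    split_ifs with hρ
    · rw [mul_one, ← hρ]
      rfl
    · simp
  · have hinit : (Fin.init π : Fin (T + 1) → X) = Fin.init π' :=
      funext fun s => hπ s.castSucc (Fin.castSucc_le_castSucc_iff.2 s.le_last)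
    rw [hinit]

theorem exp_le_exp_dropLast_Sop (f : (Fin (T + 2) → X) → EReal) :
    ν.exp f ≤ ν.dropLast.exp (Sop T f) := by
  classical
  have hmaps : ∀ π ∈ ν.supp, Fin.init π ∈ ν.supp.image (Fin.init (α := fun _ => X)) :=
    fun π hπ => Finset.mem_image_of_mem _ hπ
  rw [exp_dropLast, MartLaw.exp, ← Finset.sum_fiberwise_of_maps_to hmaps,
    ← Finset.sum_fiberwise_of_maps_to hmaps]
  refine Finset.sum_le_sum fun ρ _ => ?_
  calc ∑ π ∈ ν.supp with Fin.init π = ρ, (ν.w π : EReal) * f π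
      = ∑ π ∈ ν.supp with Fin.init π = ρ,
          (ν.w π : EReal) * f (Fin.snoc ρ (π (Fin.last (T + 1)))) :=
        Finset.sum_congr rfl fun π hπ => by
          rw [← (Finset.mem_filter.1 hπ).2, Fin.snoc_init_self]
    _ ≤ ∑ π ∈ ν.supp with Fin.init π = ρ, (ν.w π : EReal) * Sop T f ρ :=
        sum_mul_le_sum_mul_concaveEnvelope (fun y => f (Fin.snoc ρ y)) (fun π _ => ν.nonneg π)
          (ν.sum_filter_init_smul_sub ρ)
    _ = ∑ π ∈ ν.supp with Fin.init π = ρ, (ν.w π : EReal) * Sop T f (Fin.init π) :=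
        Finset.sum_congr rfl fun π hπ => by rw [(Finset.mem_filter.1 hπ).2]

end DropLast

section Extend

variable (μ : MartLaw X T x₀) (κ : ∀ π : Fin (T + 1) → X, BaryLaw X (π (Fin.last T)))

theorem sum_sigma_smul_snoc_sub (t : Fin (T + 1)) (h : (Fin (T + 2) → X) → ℝ)
    (hh : DependsOn h (Set.Iic t.castSucc)) :
    ∑ k ∈ μ.supp.sigma fun π => (Finset.univ : Finset (κ π).ι),
      (μ.w k.1 * (κ k.1).w k.2 * h (Fin.snoc k.1 ((κ k.1).point k.2))) •
        ((Fin.snoc k.1 ((κ k.1).point k.2) : Fin (T + 2) → X) t.succ -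
          (Fin.snoc k.1 ((κ k.1).point k.2) : Fin (T + 2) → X) t.castSucc) = 0 := by
  have hconst : ∀ π y, h (Fin.snoc π y) = h (Fin.snoc π 0) := fun π y =>
    dependsOn_snoc hh (fun _ _ => rfl) y 0
  rw [Finset.sum_sigma]
  simp only [hconst, Fin.snoc_castSucc (α := fun _ => X)]
  induction t using Fin.lastCases with
  | last =>
    simp only [Fin.succ_last, Fin.snoc_last (α := fun _ => X)]
    refine Finset.sum_eq_zero fun π _ => ?_
    simp only [mul_right_comm _ _ (h _), mul_smul _ ((κ π).w _), ← Finset.smul_sum,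
      BaryLaw.sum_smul_sub, smul_zero]
  | cast t =>
    simp only [← Fin.castSucc_succ, Fin.snoc_castSucc (α := fun _ => X), ← Finset.sum_smul,
      ← Finset.sum_mul, ← Finset.mul_sum, BaryLaw.total, mul_one]
    exact μ.mart t (fun π => h (Fin.snoc π 0)) fun π π' hπ => dependsOn_snoc hh hπ 0 0

/-- The law of a path drawn from `μ` and continued by one step drawn from `κ`. -/
noncomputable def extend : MartLaw X (T + 1) x₀ :=
  ofFamily (μ.supp.sigma fun π => (Finset.univ : Finset (κ π).ι))
    (fun k => μ.w k.1 * (κ k.1).w k.2) (fun k => Fin.snoc k.1 ((κ k.1).point k.2))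
    (fun k _ => mul_nonneg (μ.nonneg _) ((κ _).nonneg _))
    (by simp only [Finset.sum_sigma, ← Finset.mul_sum, BaryLaw.total, mul_one, μ.total])
    (fun k hk hwk => by
      rw [← Fin.castSucc_zero, Fin.snoc_castSucc (α := fun _ => X)]
      exact μ.init k.1 (Finset.mem_sigma.1 hk).1 (left_ne_zero_of_mul hwk))
    (μ.sum_sigma_smul_snoc_sub κ)

theorem exp_extend (f : (Fin (T + 2) → X) → EReal) :
    (μ.extend κ).exp f =
      ∑ π ∈ μ.supp, (μ.w π : EReal) * (κ π).exp fun y => f (Fin.snoc π y) := by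
  rw [extend, exp_ofFamily, Finset.sum_sigma]
  simp only [EReal.coe_mul, mul_assoc, BaryLaw.exp,
    ereal_mul_sum _ (EReal.coe_nonneg.2 (μ.nonneg _)) (EReal.coe_ne_top _)]

end Extend

theorem exp_Sop_le_iSup_exp (μ : MartLaw X T x₀) (f : (Fin (T + 2) → X) → EReal) :
    μ.exp (Sop T f) ≤ ⨆ ν : MartLaw X (T + 1) x₀, ν.exp f :=
  calc μ.exp (Sop T f)
      ≤ ∑ π ∈ μ.supp, (μ.w π : EReal) *
          ⨆ c : BaryLaw X (π (Fin.last T)), c.exp fun y => f (Fin.snoc π y) :=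
        Finset.sum_le_sum fun π _ => mul_le_mul_of_nonneg_left
          (concaveEnvelope_le_iSup_exp _ _) (EReal.coe_nonneg.2 (μ.nonneg π))
    _ ≤ ⨆ κ : ∀ π : Fin (T + 1) → X, BaryLaw X (π (Fin.last T)),
          ∑ π ∈ μ.supp, (μ.w π : EReal) * (κ π).exp fun y => f (Fin.snoc π y) :=
        ereal_sum_mul_iSup_le (fun π _ => μ.nonneg π) _
    _ ≤ ⨆ ν : MartLaw X (T + 1) x₀, ν.exp f :=
        iSup_le fun κ => le_iSup_of_le (μ.extend κ) (μ.exp_extend κ f).ge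

theorem iSup_exp_Sop (f : (Fin (T + 2) → X) → EReal) :
    ⨆ μ : MartLaw X T x₀, μ.exp (Sop T f) = ⨆ ν : MartLaw X (T + 1) x₀, ν.exp f :=
  le_antisymm (iSup_le fun μ => μ.exp_Sop_le_iSup_exp f)
    (iSup_le fun ν => le_iSup_of_le ν.dropLast (ν.exp_le_exp_dropLast_Sop f))

end MartLaw

/-- For `T ≥ 1` and `f : X^{T+1} → EReal`, the consecutive concave
envelope satisfies `f^{♯(T)}(x₀) = sup_{μ ∈ M^T(x₀)} μ[f]`. -/
theorem Scomp_eq_sup_martLaw {X : Type*} [AddCommGroup X] [Module ℝ X]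
    (T : ℕ) (hT : 1 ≤ T) (f : (Fin (T + 1) → X) → EReal) (x₀ : X) :
    Scomp T f (fun _ => x₀) = ⨆ μ : MartLaw X T x₀, μ.exp f := by
  clear hT
  induction T with
  | zero => simp only [Scomp, MartLaw.exp_zero, ciSup_const]
  | succ T ih =>
    calc Scomp (T + 1) f (fun _ => x₀)
        = ⨆ μ : MartLaw X T x₀, μ.exp (Sop T f) := ih (Sop T f)
      _ = ⨆ ν : MartLaw X (T + 1) x₀, ν.exp f := MartLaw.iSup_exp_Sop f
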